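/- Let Δ ≥ 3 be an integer, δ ∈ (0,1), let λ > 0 be up-to-Δ unique with gap δ, and let T be a finite tree of maximum degree at most Δ rooted at r. For ℓ ≥ 2 define R_r^max(ℓ) = sup_{p : L_r(ℓ) → [0,1]} R_r(ν_p) and R_r^min(ℓ) = inf_{p : L_r(ℓ) → [0,1]} R_r(ν_p). Then R_r^max(ℓ) − R_r^min(ℓ) ≤ (1−δ)^{(ℓ−2)/2} · λ·((1+λ)^Δ − 1). -/

import Mathlib

open scoped Classical
open Finset

noncomputable section

namespace PaperStmt

variable {V : Type*} [Fintype V]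

/-- The set of vertices at distance exactly `ℓ` from the root `r`. -/
def levelSet (G : SimpleGraph V) (r : V) (ℓ : ℕ) : Finset V :=
  Finset.univ.filter fun v => G.dist r v = ℓ

/-- `S` is an independent set of `G`. -/
def IsIndepSet (G : SimpleGraph V) (S : Finset V) : Prop :=
  ∀ i ∈ S, ∀ j ∈ S, ¬ G.Adj i j

/-- Weight of `S` in the level-`ℓ` pinned hardcore measure on the truncation
`T^{≤ℓ}`: the vertices in `P` (a subset of level `ℓ`) have their marginals pinned
by `p`, vertices strictly inside the ball contribute a factor `λ`. -/
def pinWeight (G : SimpleGraph V) (r : V) (lam : ℝ) (ℓ : ℕ) (P : Finset V)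
    (p : V → ℝ) (S : Finset V) : ℝ :=
  if IsIndepSet G S ∧ ∀ v ∈ S, G.dist r v ≤ ℓ then
    lam ^ (S.filter fun v => G.dist r v < ℓ).card
      * (∏ u ∈ P ∩ S, p u) * (∏ u ∈ P \ S, (1 - p u))
  else 0

/-- Probability that `x ∈ S` under the distribution proportional to the weight `w`. -/
def prMem (w : Finset V → ℝ) (x : V) : ℝ :=
  (∑ S : Finset V, if x ∈ S then w S else 0) / (∑ S : Finset V, w S)

/-- The ratio `R = Pr[x ∈ S] / (1 - Pr[x ∈ S])` for the distribution proportional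
to the weight `w`. -/
def ratio (w : Finset V → ℝ) (x : V) : ℝ := prMem w x / (1 - prMem w x)

/-- Weight realizing `ν_p^{v,in}`: the level-`ℓ(v)` pinned measure with `v`
conditioned to be in `S` and the other level-`ℓ(v)` vertices pinned by `p`. -/
def wIn (G : SimpleGraph V) (r : V) (lam : ℝ) (v : V) (p : V → ℝ) :
    Finset V → ℝ :=
  fun S => if v ∈ S then
    pinWeight G r lam (G.dist r v) ((levelSet G r (G.dist r v)).erase v) p S else 0

/-- Weight realizing `ν_p^{v,out}`. -/
def wOut (G : SimpleGraph V) (r : V) (lam : ℝ) (v : V) (p : V → ℝ) :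
    Finset V → ℝ :=
  fun S => if v ∉ S then
    pinWeight G r lam (G.dist r v) ((levelSet G r (G.dist r v)).erase v) p S else 0

/-- The `R`-pseudoinfluence `ℛ_r^v` of `v` on the root `r`. -/
def Rpseudo (G : SimpleGraph V) (r : V) (lam : ℝ) (v : V) : ℝ :=
  sSup {x : ℝ | ∃ p : V → ℝ, (∀ u, 0 ≤ p u ∧ p u ≤ 1) ∧
    x = |ratio (wIn G r lam v p) r - ratio (wOut G r lam v p) r|}

/-- The pseudoinfluence `ℐ_r^v` of `v` on the root `r` (probability version). -/
def Ipseudo (G : SimpleGraph V) (r : V) (lam : ℝ) (v : V) : ℝ :=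
  sSup {x : ℝ | ∃ p : V → ℝ, (∀ u, 0 ≤ p u ∧ p u ≤ 1) ∧
    x = |prMem (wIn G r lam v p) r - prMem (wOut G r lam v p) r|}

/-- The vertex set of the subtree `T_u`: vertices `w` such that `u` lies on the
path from `r` to `w`. -/
def subtreeSet (G : SimpleGraph V) (r u : V) : Set V :=
  {w | G.dist r w = G.dist r u + G.dist u w}

/-- The subtree `T_u` as an induced subgraph. -/
def subtree (G : SimpleGraph V) (r u : V) : SimpleGraph (subtreeSet G r u) :=
  G.induce (subtreeSet G r u)

/-- `λ` is up-to-`Δ` unique with gap `δ`. -/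
def UpToUnique (Δ : ℕ) (lam δ : ℝ) : Prop :=
  ∀ d : ℕ, 1 ≤ d → d ≤ Δ - 1 → ∀ R : ℝ, 0 < R → lam = R * (1 + R) ^ d →
    (d : ℝ) * R / (1 + R) ≤ 1 - δ

/-- `R_r^max(ℓ)`: the supremum over boundary marginals `p` at level `ℓ` of the
ratio `R_r(ν_p)`. -/
def Rmax (G : SimpleGraph V) (r : V) (lam : ℝ) (ℓ : ℕ) : ℝ :=
  sSup {x : ℝ | ∃ p : V → ℝ, (∀ u, 0 ≤ p u ∧ p u ≤ 1) ∧
    x = ratio (pinWeight G r lam ℓ (levelSet G r ℓ) p) r}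

/-- `R_r^min(ℓ)`: the infimum over boundary marginals `p` at level `ℓ` of the
ratio `R_r(ν_p)`. -/
def Rmin (G : SimpleGraph V) (r : V) (lam : ℝ) (ℓ : ℕ) : ℝ :=
  sInf {x : ℝ | ∃ p : V → ℝ, (∀ u, 0 ≤ p u ∧ p u ≤ 1) ∧
    x = ratio (pinWeight G r lam ℓ (levelSet G r ℓ) p) r}

/-!
In the coordinate `arsinh √R` the hardcore recursion contracts at the rate of its fixed point. With
`d` equal children of ratio `x` and `f = λ / (1 + x) ^ d`, the squared derivative of the recursion
there is `d ^ 2 * (x / (1 + x)) * (f / (1 + f))`. The logarithms of the two fractions are concave,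
in `log (1 + x)` and in `log f` respectively; at the point `y` with `d * y = 1 + λ / (1 + y) ^ d`
the slopes of the two tangents cancel, so `y` is the maximiser, and the value there,
`d * f / (1 + y)`, is at most `d * R / (1 + R)` for the fixed point `R`, hence at most `1 - δ`.
Cauchy–Schwarz and AM–GM reduce unequal children to equal ones.

A vertex other than the root has at most `Δ - 1` children, so each level contracts by `√(1 - δ)`.
The root may have `d + 1 = Δ` children, which costs a factor `(d + 1) / d`; this factor is absorbed
by the slack in the bound `λ * ((1 + λ) ^ Δ - 1)` on the initial discrepancy.
-/

section SymmetricDecay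

variable {lam x y R : ℝ} {d : ℕ}

/-- The squared derivative at `R = x` of the recursion `R ↦ λ / (1 + R) ^ d`, taken in the
coordinate `arsinh √R` on both sides. -/
def symmetricDecay (lam : ℝ) (d : ℕ) (x : ℝ) : ℝ :=
  (d : ℝ) ^ 2 * (x / (1 + x)) * ((lam / (1 + x) ^ d) / (1 + lam / (1 + x) ^ d))

lemma exists_pos_eq_mul_one_add_pow (hlam : 0 < lam) (d : ℕ) :
    ∃ R : ℝ, 0 < R ∧ lam = R * (1 + R) ^ d := by
  have hcont : ContinuousOn (fun R : ℝ => R * (1 + R) ^ d) (Set.Icc 0 lam) := by fun_prop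
  have hmem : lam ∈ Set.Icc ((0 : ℝ) * (1 + 0) ^ d) (lam * (1 + lam) ^ d) :=
    ⟨by simpa only [zero_mul] using hlam.le,
      le_mul_of_one_le_right hlam.le (one_le_pow₀ (by linarith))⟩
  obtain ⟨R, ⟨hR0, -⟩, hR⟩ := intermediate_value_Icc hlam.le hcont hmem
  refine ⟨R, hR0.lt_of_ne ?_, hR.symm⟩
  rintro rfl
  exact hlam.ne (by simpa only [zero_mul] using hR)

lemma exists_pos_mul_eq_one_add_div (hlam : 0 < lam) (hd : d ≠ 0) :
    ∃ y : ℝ, 0 < y ∧ d * y = 1 + lam / (1 + y) ^ d := by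
  have hd1 : (1 : ℝ) ≤ d := by exact_mod_cast Nat.one_le_iff_ne_zero.2 hd
  have hcont : ContinuousOn (fun y : ℝ => d * y - lam / (1 + y) ^ d) (Set.Icc 0 (1 + lam)) := by
    refine ContinuousOn.sub (by fun_prop) (ContinuousOn.div (by fun_prop) (by fun_prop) ?_)
    intro z hz
    have : 0 < 1 + z := by linarith [hz.1]
    positivity
  have hmem : (1 : ℝ) ∈ Set.Icc ((d : ℝ) * 0 - lam / (1 + 0) ^ d)
      (d * (1 + lam) - lam / (1 + (1 + lam)) ^ d) := by
    have : lam / (1 + (1 + lam)) ^ d ≤ lam := div_le_self hlam.le (one_le_pow₀ (by linarith))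
    constructor
    · simp only [mul_zero, add_zero, one_pow, div_one]
      linarith
    · nlinarith
  obtain ⟨y, ⟨hy0, -⟩, hy⟩ := intermediate_value_Icc (by linarith) hcont hmem
  have hpos : 0 < lam / (1 + y) ^ d := by positivity
  exact ⟨y, by by_contra! h; nlinarith, by linarith⟩

-- `log (x / (1 + x))` is concave in `log (1 + x)`, with slope `1 / x`.
lemma div_one_add_le_mul_exp_log_one_add (hy : 0 < y) (hx : 0 ≤ x) :
    x / (1 + x) ≤ y / (1 + y) * Real.exp (Real.log ((1 + x) / (1 + y)) / y) := by
  have hlog := Real.one_sub_inv_le_log_of_pos (x := (1 + x) / (1 + y)) (by positivity)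
  calc x / (1 + x) = y / (1 + y) * ((1 - ((1 + x) / (1 + y))⁻¹) / y + 1) := by field_simp; ring
    _ ≤ y / (1 + y) * (Real.log ((1 + x) / (1 + y)) / y + 1) := by gcongr
    _ ≤ _ := by gcongr; exact Real.add_one_le_exp _

-- `log (x / (1 + x))` is concave in `log x`, with slope `1 / (1 + x)`.
lemma div_one_add_le_mul_exp_log (hy : 0 < y) (hx : 0 < x) :
    x / (1 + x) ≤ y / (1 + y) * Real.exp (Real.log (x / y) / (1 + y)) := by
  set w := Real.log (x / y) / (1 + y) with hw
  have hxy : x = y * Real.exp (w * y) * Real.exp w := by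
    rw [mul_assoc, ← Real.exp_add, show w * y + w = Real.log (x / y) by rw [hw]; field_simp; ring,
      Real.exp_log (by positivity)]
    field_simp
  have htangent : Real.exp (w * y) * (1 + y) ≤ 1 + x := by
    have h1 := Real.add_one_le_exp (-(w * y))
    have h2 := Real.add_one_le_exp w
    calc Real.exp (w * y) * (1 + y)
        ≤ Real.exp (w * y) * (Real.exp (-(w * y)) + y * Real.exp w) :=
          mul_le_mul_of_nonneg_left (by nlinarith) (Real.exp_pos _).le
      _ = 1 + x := by
        rw [mul_add, ← Real.exp_add, add_neg_cancel, Real.exp_zero, hxy]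
        ring
  rw [div_mul_eq_mul_div, div_le_div_iff₀ (by positivity) (by positivity)]
  calc x * (1 + y) = y * Real.exp w * (Real.exp (w * y) * (1 + y)) := by rw [hxy]; ring
    _ ≤ y * Real.exp w * (1 + x) := by gcongr

lemma symmetricDecay_le_of_mul_eq_one_add_div (hlam : 0 < lam) (hy : 0 < y)
    (hcrit : d * y = 1 + lam / (1 + y) ^ d) (hx : 0 ≤ x) :
    symmetricDecay lam d x ≤ symmetricDecay lam d y := by
  set g := lam / (1 + y) ^ d with hg
  have hg0 : 0 < g := by positivity
  set f := lam / (1 + x) ^ d with hf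
  have hf0 : 0 < f := by positivity
  set u := Real.log ((1 + x) / (1 + y)) with hu
  have hcancel : Real.log (f / g) / (1 + g) = -(u / y) := by
    have hfg : f / g = (((1 + x) / (1 + y)) ^ d)⁻¹ := by rw [hf, hg, div_pow]; field_simp
    rw [hfg, Real.log_inv, Real.log_pow, ← hu, ← hcrit]
    have : (d : ℝ) ≠ 0 := by rintro h; rw [h, zero_mul] at hcrit; linarith
    field_simp
  have hprod : x / (1 + x) * (f / (1 + f)) ≤ y / (1 + y) * (g / (1 + g)) := by
    calc x / (1 + x) * (f / (1 + f))
        ≤ (y / (1 + y) * Real.exp (u / y)) * (g / (1 + g) * Real.exp (-(u / y))) := by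
          gcongr
          · exact div_one_add_le_mul_exp_log_one_add hy hx
          · exact hcancel ▸ div_one_add_le_mul_exp_log hg0 hf0
      _ = y / (1 + y) * (g / (1 + g)) * (Real.exp (u / y) * Real.exp (-(u / y))) := by ring
      _ = _ := by rw [← Real.exp_add, add_neg_cancel, Real.exp_zero, mul_one]
  rw [symmetricDecay, symmetricDecay, mul_assoc, mul_assoc]
  gcongr

lemma symmetricDecay_eq_of_mul_eq_one_add_div (hlam : 0 < lam) (hy : 0 < y)
    (hcrit : d * y = 1 + lam / (1 + y) ^ d) :
    symmetricDecay lam d y = d * (lam / (1 + y) ^ d) / (1 + y) := by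
  have hg : 0 < lam / (1 + y) ^ d := by positivity
  have hne : (d : ℝ) * y ≠ 0 := by linarith
  rw [symmetricDecay, ← hcrit]
  have hd : (d : ℝ) ≠ 0 := left_ne_zero_of_mul hne
  field_simp

lemma symmetricDecay_le_of_fixedPoint (hR : 0 < R) (hfix : lam = R * (1 + R) ^ d)
    (hstable : d * R / (1 + R) ≤ 1) (hx : 0 ≤ x) :
    symmetricDecay lam d x ≤ d * R / (1 + R) := by
  rcases eq_or_ne d 0 with rfl | hd
  · simp [symmetricDecay]
  have hlam : 0 < lam := by rw [hfix]; positivity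
  obtain ⟨y, hy, hcrit⟩ := exists_pos_mul_eq_one_add_div hlam hd
  have hRy : R ≤ y := by
    by_contra! hlt
    have hRg : R ≤ lam / (1 + y) ^ d := by
      rw [le_div_iff₀ (by positivity), hfix]
      gcongr
    have hdR : (d : ℝ) * y < d * R := by gcongr
    rw [div_le_one (by positivity)] at hstable
    linarith
  have hgR : lam / (1 + y) ^ d ≤ R := by
    rw [div_le_iff₀ (by positivity), hfix]
    gcongr
  calc symmetricDecay lam d x
      ≤ symmetricDecay lam d y := symmetricDecay_le_of_mul_eq_one_add_div hlam hy hcrit hx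
    _ = d * (lam / (1 + y) ^ d) / (1 + y) :=
        symmetricDecay_eq_of_mul_eq_one_add_div hlam hy hcrit
    _ ≤ d * R / (1 + R) := by gcongr

lemma symmetricDecay_succ_le (hlam : 0 ≤ lam) (hd : d ≠ 0) (hx : 0 ≤ x) :
    symmetricDecay lam (d + 1) x ≤ (((d : ℝ) + 1) / d) ^ 2 * symmetricDecay lam d x := by
  have hmono : (lam / (1 + x) ^ (d + 1)) / (1 + lam / (1 + x) ^ (d + 1)) ≤
      (lam / (1 + x) ^ d) / (1 + lam / (1 + x) ^ d) := by
    have : lam / (1 + x) ^ (d + 1) ≤ lam / (1 + x) ^ d := by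
      gcongr
      · linarith
      · omega
    rw [div_le_div_iff₀ (by positivity) (by positivity)]
    linarith
  calc symmetricDecay lam (d + 1) x
      ≤ ((d + 1 : ℕ) : ℝ) ^ 2 * (x / (1 + x)) *
          ((lam / (1 + x) ^ d) / (1 + lam / (1 + x) ^ d)) := by
        rw [symmetricDecay]; gcongr
    _ = (((d : ℝ) + 1) / d) ^ 2 * symmetricDecay lam d x := by
        rw [symmetricDecay]; push_cast; field_simp

end SymmetricDecay

section UpToUnique

variable {Δ k : ℕ} {lam δ x : ℝ}

lemma UpToUnique.lt_one (hu : UpToUnique Δ lam δ) (hΔ : 2 ≤ Δ) (hlam : 0 < lam) : δ < 1 := by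
  obtain ⟨R, hR, hfix⟩ := exists_pos_eq_mul_one_add_pow hlam 1
  have hpos : 0 < ((1 : ℕ) : ℝ) * R / (1 + R) := by push_cast; positivity
  linarith [hu 1 le_rfl (by omega) R hR hfix]

lemma UpToUnique.symmetricDecay_le (hu : UpToUnique Δ lam δ) (hΔ : 2 ≤ Δ) (hlam : 0 < lam)
    (hδ0 : 0 ≤ δ) (hk : k < Δ) (hx : 0 ≤ x) : symmetricDecay lam k x ≤ 1 - δ := by
  rcases eq_or_ne k 0 with rfl | hk0
  · simpa [symmetricDecay] using (hu.lt_one hΔ hlam).le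
  obtain ⟨R, hR, hfix⟩ := exists_pos_eq_mul_one_add_pow hlam k
  have hstable := hu k (by omega) (by omega) R hR hfix
  exact (symmetricDecay_le_of_fixedPoint hR hfix (by linarith) hx).trans hstable

end UpToUnique

section HyperbolicStep

variable {ι : Type*} {s : Finset ι} {lam q ε : ℝ}

lemma card_mul_le_sum_of_prod_eq_pow {a : ι → ℝ} {y : ℝ} (ha : ∀ i ∈ s, 0 ≤ a i) (hy : 0 ≤ y)
    (hprod : ∏ i ∈ s, a i = y ^ s.card) : s.card * y ≤ ∑ i ∈ s, a i := by
  rcases s.eq_empty_or_nonempty with rfl | hs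
  · simp
  have hcard : (0 : ℝ) < s.card := by exact_mod_cast hs.card_pos
  have hmean := Real.geom_mean_le_arith_mean s (fun _ => 1) a (fun _ _ => zero_le_one)
    (by simpa using hs) ha
  simp only [Real.rpow_one, sum_const, nsmul_eq_mul, mul_one, one_mul, hprod] at hmean
  rwa [Real.pow_rpow_inv_natCast hy hs.card_ne_zero, le_div_iff₀' hcard] at hmean

lemma exists_one_add_pow_card_eq_prod {b : ι → ℝ} (hb : ∀ i ∈ s, 1 ≤ b i) :
    ∃ x : ℝ, 0 ≤ x ∧ (1 + x) ^ s.card = ∏ i ∈ s, b i := by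
  rcases s.eq_empty_or_nonempty with rfl | hs
  · exact ⟨0, le_rfl, by simp⟩
  have hone : 1 ≤ ∏ i ∈ s, b i := Finset.one_le_prod hb
  refine ⟨(∏ i ∈ s, b i) ^ (s.card : ℝ)⁻¹ - 1, ?_, ?_⟩
  · exact sub_nonneg.2 (Real.one_le_rpow hone (by positivity))
  · rw [add_sub_cancel, Real.rpow_inv_natCast_pow (by linarith) hs.card_ne_zero]

lemma tanh_sq_eq_one_sub_inv_cosh_sq (t : ℝ) :
    Real.tanh t ^ 2 = 1 - (Real.cosh t ^ 2)⁻¹ := by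
  have := Real.cosh_pos t
  rw [Real.tanh_eq_sinh_div_cosh, div_pow, Real.sinh_sq]
  field_simp

lemma sq_sum_abs_tanh_le {t : ι → ℝ} {x : ℝ} (hx : 0 ≤ x)
    (hprod : (1 + x) ^ s.card = ∏ i ∈ s, Real.cosh (t i) ^ 2) :
    (∑ i ∈ s, |Real.tanh (t i)|) ^ 2 ≤ (s.card : ℝ) ^ 2 * (x / (1 + x)) := by
  have hmean : s.card * (1 + x)⁻¹ ≤ ∑ i ∈ s, (Real.cosh (t i) ^ 2)⁻¹ :=
    card_mul_le_sum_of_prod_eq_pow (fun i _ => by positivity) (by positivity)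
      (by rw [prod_inv_distrib, ← hprod, inv_pow])
  calc (∑ i ∈ s, |Real.tanh (t i)|) ^ 2
      ≤ s.card * ∑ i ∈ s, |Real.tanh (t i)| ^ 2 := sq_sum_le_card_mul_sum_sq
    _ = s.card * (s.card - ∑ i ∈ s, (Real.cosh (t i) ^ 2)⁻¹) := by
        simp only [sq_abs, tanh_sq_eq_one_sub_inv_cosh_sq, sum_sub_distrib, sum_const,
          nsmul_eq_mul, mul_one]
    _ ≤ s.card * (s.card - s.card * (1 + x)⁻¹) := by gcongr
    _ = (s.card : ℝ) ^ 2 * (x / (1 + x)) := by field_simp; ring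

/-- The hardcore recursion `R ↦ λ ∏ᵢ (1 + Rᵢ)⁻¹` in the coordinate `t = arsinh √R`, for which
`1 + R = cosh² t`. -/
def hyperbolicStep (lam : ℝ) (s : Finset ι) (t : ι → ℝ) : ℝ :=
  Real.arsinh (√lam * ∏ i ∈ s, (Real.cosh (t i))⁻¹)

lemma hasDerivAt_hyperbolicStep {t : ℝ → ι → ℝ} {t' : ι → ℝ} {z : ℝ}
    (ht : ∀ i ∈ s, HasDerivAt (fun z => t z i) (t' i) z) :
    HasDerivAt (fun z => hyperbolicStep lam s (t z))
      (-(Real.tanh (hyperbolicStep lam s (t z)) * ∑ i ∈ s, Real.tanh (t z i) * t' i)) z := by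
  have hexp : ∀ z, √lam * ∏ i ∈ s, (Real.cosh (t z i))⁻¹ =
      √lam * Real.exp (-∑ i ∈ s, Real.log (Real.cosh (t z i))) := fun z => by
    simp only [← sum_neg_distrib, Real.exp_sum, Real.exp_neg, Real.exp_log (Real.cosh_pos _)]
  have hlog : ∀ i ∈ s, HasDerivAt (fun z => Real.log (Real.cosh (t z i)))
      (Real.tanh (t z i) * t' i) z := fun i hi => by
    convert (ht i hi).cosh.log (Real.cosh_pos _).ne' using 1
    rw [Real.tanh_eq_sinh_div_cosh]
    ring
  simp only [hyperbolicStep, Real.tanh_arsinh, hexp]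
  convert (((HasDerivAt.fun_sum hlog).fun_neg.exp).const_mul √lam).arsinh using 1
  rw [smul_eq_mul]
  ring

lemma abs_tanh_hyperbolicStep_mul_sum_le (hlam : 0 ≤ lam) (hq : 0 ≤ q)
    (hdecay : ∀ x : ℝ, 0 ≤ x → symmetricDecay lam s.card x ≤ q ^ 2) (t : ι → ℝ) :
    |Real.tanh (hyperbolicStep lam s t)| * ∑ i ∈ s, |Real.tanh (t i)| ≤ q := by
  obtain ⟨x, hx, hprod⟩ := exists_one_add_pow_card_eq_prod (s := s)
    (b := fun i => Real.cosh (t i) ^ 2) fun i _ => one_le_pow₀ (Real.one_le_cosh _)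
  have hsq : (√lam * ∏ i ∈ s, (Real.cosh (t i))⁻¹) ^ 2 = lam / (1 + x) ^ s.card := by
    rw [mul_pow, Real.sq_sqrt hlam, hprod, prod_inv_distrib, inv_pow, prod_pow, div_eq_mul_inv]
  have htanh : Real.tanh (hyperbolicStep lam s t) ^ 2 =
      (lam / (1 + x) ^ s.card) / (1 + lam / (1 + x) ^ s.card) := by
    rw [hyperbolicStep, Real.tanh_arsinh, div_pow, Real.sq_sqrt (by positivity), hsq]
  refine abs_le_of_sq_le_sq' ?_ hq |>.2
  calc (|Real.tanh (hyperbolicStep lam s t)| * ∑ i ∈ s, |Real.tanh (t i)|) ^ 2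
      = Real.tanh (hyperbolicStep lam s t) ^ 2 * (∑ i ∈ s, |Real.tanh (t i)|) ^ 2 := by
        rw [mul_pow, sq_abs]
    _ ≤ Real.tanh (hyperbolicStep lam s t) ^ 2 * ((s.card : ℝ) ^ 2 * (x / (1 + x))) := by
        gcongr
        exact sq_sum_abs_tanh_le hx hprod
    _ = symmetricDecay lam s.card x := by rw [htanh, symmetricDecay, mul_comm]
    _ ≤ q ^ 2 := hdecay x hx

lemma abs_hyperbolicStep_sub_le (hlam : 0 ≤ lam) (hq : 0 ≤ q)
    (hdecay : ∀ x : ℝ, 0 ≤ x → symmetricDecay lam s.card x ≤ q ^ 2)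
    {a b : ι → ℝ} (hε : 0 ≤ ε) (hab : ∀ i ∈ s, |a i - b i| ≤ ε) :
    |hyperbolicStep lam s a - hyperbolicStep lam s b| ≤ q * ε := by
  set t : ℝ → ι → ℝ := fun z i => b i + z * (a i - b i) with ht
  have hderiv := fun z : ℝ => hasDerivAt_hyperbolicStep (s := s) (lam := lam) (t := t)
    (t' := fun i => a i - b i) (z := z) fun i _ => by
      simpa only [one_mul, id] using ((hasDerivAt_id z).mul_const (a i - b i)).const_add (b i)
  have hbound : ∀ z : ℝ, ‖-(Real.tanh (hyperbolicStep lam s (t z)) *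
      ∑ i ∈ s, Real.tanh (t z i) * (a i - b i))‖ ≤ q * ε := fun z => by
    have hsum : |∑ i ∈ s, Real.tanh (t z i) * (a i - b i)| ≤
        (∑ i ∈ s, |Real.tanh (t z i)|) * ε := by
      rw [sum_mul]
      refine (abs_sum_le_sum_abs _ _).trans (sum_le_sum fun i hi => ?_)
      rw [abs_mul]
      exact mul_le_mul_of_nonneg_left (hab i hi) (abs_nonneg _)
    rw [norm_neg, Real.norm_eq_abs, abs_mul]
    calc _ ≤ |Real.tanh (hyperbolicStep lam s (t z))| * ((∑ i ∈ s, |Real.tanh (t z i)|) * ε) := by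
          gcongr
      _ = |Real.tanh (hyperbolicStep lam s (t z))| * (∑ i ∈ s, |Real.tanh (t z i)|) * ε :=
          (mul_assoc _ _ _).symm
      _ ≤ q * ε := by
          gcongr
          exact abs_tanh_hyperbolicStep_mul_sum_le hlam hq hdecay (t z)
  simpa [ht] using norm_image_sub_le_of_norm_deriv_le_segment_01'
    (fun z _ => (hderiv z).hasDerivWithinAt) (fun z _ => hbound z)

end HyperbolicStep

section HyperbolicCoord

variable {lam a b R : ℝ}

/-- The coordinate `arsinh √R` on ratios, in which the hardcore recursion contracts. -/
def hyperbolicCoord (R : ℝ) : ℝ := Real.arsinh √R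

lemma cosh_hyperbolicCoord (hR : 0 ≤ R) : Real.cosh (hyperbolicCoord R) = √(1 + R) := by
  rw [hyperbolicCoord, Real.cosh_arsinh, Real.sq_sqrt hR]

lemma sinh_hyperbolicCoord_sq (hR : 0 ≤ R) : Real.sinh (hyperbolicCoord R) ^ 2 = R := by
  rw [hyperbolicCoord, Real.sinh_arsinh, Real.sq_sqrt hR]

lemma abs_arsinh_sub_le (x y : ℝ) : |Real.arsinh x - Real.arsinh y| ≤ |x - y| := by
  have hbound : ∀ z ∈ Set.univ, ‖(√(1 + z ^ 2))⁻¹‖ ≤ 1 := fun z _ => by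
    rw [Real.norm_eq_abs, abs_of_nonneg (by positivity)]
    exact inv_le_one_of_one_le₀ (Real.one_le_sqrt.2 (by linarith [sq_nonneg z]))
  simpa using convex_univ.norm_image_sub_le_of_norm_hasDerivWithin_le
    (fun z _ => (Real.hasDerivAt_arsinh z).hasDerivWithinAt) hbound
    (Set.mem_univ y) (Set.mem_univ x)

lemma abs_hyperbolicCoord_sub_le_of_mem_Icc (ha : a ∈ Set.Icc R lam) (hb : b ∈ Set.Icc R lam) :
    |hyperbolicCoord a - hyperbolicCoord b| ≤ √lam - √R :=
  (abs_arsinh_sub_le _ _).trans (abs_sub_le_of_le_of_le (Real.sqrt_le_sqrt ha.1)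
    (Real.sqrt_le_sqrt ha.2) (Real.sqrt_le_sqrt hb.1) (Real.sqrt_le_sqrt hb.2))

lemma sub_le_mul_abs_hyperbolicCoord_sub (ha : a ∈ Set.Icc 0 lam) (hb : b ∈ Set.Icc 0 lam) :
    a - b ≤ 2 * √lam * √(1 + lam) * |hyperbolicCoord a - hyperbolicCoord b| := by
  have hlam : 0 ≤ lam := ha.1.trans ha.2
  have hmem : ∀ c ∈ Set.Icc 0 lam, hyperbolicCoord c ∈ Set.Icc 0 (hyperbolicCoord lam) :=
    fun c hc => ⟨Real.arsinh_nonneg_iff.2 (Real.sqrt_nonneg c),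
      Real.arsinh_le_arsinh.2 (Real.sqrt_le_sqrt hc.2)⟩
  have hbound : ∀ z ∈ Set.Icc 0 (hyperbolicCoord lam),
      ‖2 * Real.sinh z * Real.cosh z‖ ≤ 2 * √lam * √(1 + lam) := fun z hz => by
    have hsinh : Real.sinh z ≤ √lam := by
      simpa only [hyperbolicCoord, Real.sinh_arsinh] using Real.sinh_le_sinh.2 hz.2
    have hcosh : Real.cosh z ≤ √(1 + lam) := by
      rw [← cosh_hyperbolicCoord hlam]
      exact Real.cosh_le_cosh.2 (abs_le_abs_of_nonneg hz.1 hz.2)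
    have := Real.sinh_nonneg_iff.2 hz.1
    have := Real.cosh_pos z
    rw [Real.norm_eq_abs, abs_of_nonneg (by positivity)]
    gcongr
  have hsub := (convex_Icc 0 (hyperbolicCoord lam)).norm_image_sub_le_of_norm_hasDerivWithin_le
    (f := fun t => Real.sinh t ^ 2)
    (fun z _ => by simpa using ((Real.hasDerivAt_sinh z).fun_pow 2).hasDerivWithinAt) hbound
    (hmem b hb) (hmem a ha)
  simp only [sinh_hyperbolicCoord_sq ha.1, sinh_hyperbolicCoord_sq hb.1, Real.norm_eq_abs] at hsub
  exact (le_abs_self _).trans hsub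

end HyperbolicCoord

section RootedTree

variable {W : Type*} {G : SimpleGraph W} {r u v w : W}

lemma parent_unique (hG : G.IsTree) (hu : G.Adj u w) (hv : G.Adj v w)
    (hdu : G.dist r w = G.dist r u + 1) (hdv : G.dist r w = G.dist r v + 1) : u = v := by
  obtain ⟨p, hp, -⟩ := hG.connected.exists_path_of_dist r w
  have hpen : ∀ x, G.Adj x w → G.dist r w = G.dist r x + 1 → x = p.penultimate := by
    intro x hx hdx
    obtain ⟨q, -, hq⟩ := hG.connected.exists_path_of_dist r x
    have hpath : (q.concat hx).IsPath := SimpleGraph.Walk.isPath_of_length_eq_dist _ (by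
      rw [SimpleGraph.Walk.length_concat, hq, hdx])
    rw [(hG.existsUnique_path r w).unique hp hpath, SimpleGraph.Walk.penultimate_concat]
  rw [hpen u hu hdu, hpen v hv hdv]

lemma exists_parent (hG : G.IsTree) (hv : v ≠ r) :
    ∃ u, G.Adj v u ∧ G.dist r v = G.dist r u + 1 := by
  obtain ⟨p, hp⟩ := hG.connected.exists_walk_length_eq_dist v r
  cases p with
  | nil => exact absurd rfl hv
  | @cons _ u _ hvu q =>
    rw [SimpleGraph.Walk.length_cons, SimpleGraph.dist_comm] at hp
    have hq := SimpleGraph.dist_le q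
    rw [SimpleGraph.dist_comm] at hq
    refine ⟨u, hvu, ?_⟩
    rcases hG.dist_eq_dist_add_one_of_adj r hvu with h | h <;> omega

end RootedTree

section Children

variable {G : SimpleGraph V} {r v w : V} {ℓ Δ : ℕ}

/-- The children of `v` in the tree `G` rooted at `r`. -/
def children (G : SimpleGraph V) (r v : V) : Finset V :=
  Finset.univ.filter fun w => G.Adj v w ∧ G.dist r w = G.dist r v + 1

lemma mem_levelSet : v ∈ levelSet G r ℓ ↔ G.dist r v = ℓ := by simp [levelSet]

lemma mem_children : w ∈ children G r v ↔ G.Adj v w ∧ G.dist r w = G.dist r v + 1 := by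
  simp [children]

lemma ne_root_of_mem_children (hw : w ∈ children G r v) : w ≠ r := by
  rintro rfl
  simpa using (mem_children.1 hw).2

lemma pairwiseDisjoint_children (hG : G.IsTree) (s : Set V) :
    s.PairwiseDisjoint (children G r) := by
  refine fun u _ v _ huv => disjoint_left.2 fun w hu hv => huv ?_
  rw [mem_children] at hu hv
  exact parent_unique hG hu.1 hv.1 hu.2 hv.2

lemma card_children_le (hdeg : ∀ v : V, (G.neighborSet v).ncard ≤ Δ) (r v : V) :
    (children G r v).card ≤ Δ := by
  refine le_trans ?_ (hdeg v)
  rw [← Set.ncard_coe_finset]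
  exact Set.ncard_le_ncard (fun w hw => (mem_children.1 hw).1) (Set.toFinite _)

lemma card_children_lt (hG : G.IsTree) (hdeg : ∀ v : V, (G.neighborSet v).ncard ≤ Δ)
    (hv : v ≠ r) : (children G r v).card < Δ := by
  refine lt_of_lt_of_le ?_ (hdeg v)
  obtain ⟨u, hvu, hdist⟩ := exists_parent hG hv
  rw [← Set.ncard_coe_finset]
  refine Set.ncard_lt_ncard ⟨fun w hw => (mem_children.1 hw).1, fun hsub => ?_⟩ (Set.toFinite _)
  have := (mem_children.1 (hsub hvu)).2
  omega

end Children

section TreeRecursion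

variable {G : SimpleGraph V} {r v : V} {lam : ℝ} {p : V → ℝ}

/-- The ratio at `v` that the hardcore tree recursion computes from the marginals `p` of its
children. -/
def ratioStep (G : SimpleGraph V) (r : V) (lam : ℝ) (p : V → ℝ) (v : V) : ℝ :=
  lam * ∏ c ∈ children G r v, (1 - p c)

/-- The hardcore tree recursion on marginals: every vertex gets the marginal determined by those of
its children. -/
def marginalStep (G : SimpleGraph V) (r : V) (lam : ℝ) (p : V → ℝ) (v : V) : ℝ :=
  ratioStep G r lam p v / (1 + ratioStep G r lam p v)

lemma ratioStep_mem_Icc (hlam : 0 ≤ lam) (hp : ∀ u, p u ∈ Set.Icc (0 : ℝ) 1) (v : V) :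
    ratioStep G r lam p v ∈ Set.Icc 0 lam :=
  ⟨mul_nonneg hlam (prod_nonneg fun c _ => sub_nonneg.2 (hp c).2),
    mul_le_of_le_one_right hlam
      (prod_le_one (fun c _ => sub_nonneg.2 (hp c).2) fun c _ => sub_le_self _ (hp c).1)⟩

lemma one_add_ratioStep_pos (hlam : 0 ≤ lam) (hp : ∀ u, p u ∈ Set.Icc (0 : ℝ) 1) (v : V) :
    0 < 1 + ratioStep G r lam p v :=
  add_pos_of_pos_of_nonneg one_pos (ratioStep_mem_Icc hlam hp v).1

lemma marginalStep_mem_Icc (hlam : 0 ≤ lam) (hp : ∀ u, p u ∈ Set.Icc (0 : ℝ) 1) (v : V) :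
    marginalStep G r lam p v ∈ Set.Icc (0 : ℝ) 1 := by
  have hpos := one_add_ratioStep_pos (G := G) (r := r) hlam hp v
  exact ⟨div_nonneg (ratioStep_mem_Icc hlam hp v).1 hpos.le,
    div_le_one_of_le₀ (by linarith) hpos.le⟩

lemma iterate_marginalStep_mem_Icc (hlam : 0 ≤ lam) (hp : ∀ u, p u ∈ Set.Icc (0 : ℝ) 1)
    (n : ℕ) (u : V) : (marginalStep G r lam)^[n] p u ∈ Set.Icc (0 : ℝ) 1 := by
  induction n generalizing p with
  | zero => exact hp u
  | succ _ ih => exact ih (marginalStep_mem_Icc hlam hp)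

lemma one_sub_marginalStep (hlam : 0 ≤ lam) (hp : ∀ u, p u ∈ Set.Icc (0 : ℝ) 1) (v : V) :
    1 - marginalStep G r lam p v = (1 + ratioStep G r lam p v)⁻¹ := by
  have := one_add_ratioStep_pos (G := G) (r := r) hlam hp v
  rw [marginalStep]
  field_simp
  ring

lemma marginalStep_div_one_sub (hlam : 0 ≤ lam) (hp : ∀ u, p u ∈ Set.Icc (0 : ℝ) 1) (v : V) :
    marginalStep G r lam p v / (1 - marginalStep G r lam p v) = ratioStep G r lam p v := by
  have := one_add_ratioStep_pos (G := G) (r := r) hlam hp v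
  rw [one_sub_marginalStep hlam hp, marginalStep]
  field_simp

lemma prod_one_add_ratioStep_mul (hlam : 0 ≤ lam) (hp : ∀ u, p u ∈ Set.Icc (0 : ℝ) 1)
    (A S : Finset V) :
    (∏ v ∈ A, (1 + ratioStep G r lam p v)) *
        ((∏ v ∈ A ∩ S, marginalStep G r lam p v) * ∏ v ∈ A \ S, (1 - marginalStep G r lam p v)) =
      ∏ v ∈ A ∩ S, ratioStep G r lam p v := by
  have hne : ∀ v, 1 + ratioStep G r lam p v ≠ 0 := fun v => (one_add_ratioStep_pos hlam hp v).ne'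
  rw [← prod_inter_mul_prod_sdiff A S (fun v => 1 + ratioStep G r lam p v), mul_mul_mul_comm,
    ← prod_mul_distrib, ← prod_mul_distrib]
  simp only [one_sub_marginalStep hlam hp, mul_inv_cancel₀ (hne _), prod_const_one, mul_one]
  simp only [marginalStep, mul_div_cancel₀ _ (hne _)]

end TreeRecursion

section PinWeight

variable {G : SimpleGraph V} {r : V} {lam : ℝ} {p : V → ℝ} {ℓ : ℕ} {S T : Finset V}

lemma isIndepSet_union_iff_of_subset_levelSet (hG : G.IsTree) (hT : T ⊆ levelSet G r ℓ) :
    IsIndepSet G (S ∪ T) ↔ IsIndepSet G S ∧ ∀ u ∈ T, ¬ ∃ v ∈ S, G.Adj v u := by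
  constructor
  · exact fun h => ⟨fun i hi j hj => h i (mem_union_left T hi) j (mem_union_left T hj),
      fun u hu ⟨v, hv, hvu⟩ => h v (mem_union_left T hv) u (mem_union_right S hu) hvu⟩
  · rintro ⟨hS, hST⟩ i hi j hj hij
    rcases mem_union.1 hi with hi | hi <;> rcases mem_union.1 hj with hj | hj
    · exact hS i hi j hj hij
    · exact hST j hj ⟨i, hi, hij⟩
    · exact hST i hi ⟨j, hj, hij.symm⟩
    · exact hG.dist_ne_of_adj r hij
        ((mem_levelSet.1 (hT hi)).trans (mem_levelSet.1 (hT hj)).symm)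

lemma pinWeight_succ_union (hG : G.IsTree) (hS : IsIndepSet G S)
    (hSℓ : ∀ v ∈ S, G.dist r v ≤ ℓ) (hT : T ⊆ levelSet G r (ℓ + 1)) :
    pinWeight G r lam (ℓ + 1) (levelSet G r (ℓ + 1)) p (S ∪ T) =
      lam ^ S.card * ((∏ u ∈ T, if ∃ v ∈ S, G.Adj v u then 0 else p u) *
        ∏ u ∈ levelSet G r (ℓ + 1) \ T, (1 - p u)) := by
  have hTℓ : ∀ u ∈ T, G.dist r u = ℓ + 1 := fun u hu => mem_levelSet.1 (hT hu)
  have hdisj : Disjoint (levelSet G r (ℓ + 1)) S := disjoint_left.2 fun v hv hvS => by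
    have := hSℓ v hvS
    rw [mem_levelSet] at hv
    omega
  have hsdiff : levelSet G r (ℓ + 1) \ (S ∪ T) = levelSet G r (ℓ + 1) \ T := by
    rw [← sup_eq_union, ← sdiff_sdiff, hdisj.sdiff_eq_left]
  have hfilter : (S ∪ T).filter (fun v => G.dist r v < ℓ + 1) = S := by
    rw [filter_union, filter_true_of_mem fun v hv => Nat.lt_succ_of_le (hSℓ v hv),
      filter_false_of_mem fun u hu => (hTℓ u hu).not_lt, union_empty]
  have hlevel : ∀ v ∈ S ∪ T, G.dist r v ≤ ℓ + 1 := fun v hv =>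
    (mem_union.1 hv).elim (fun h => (hSℓ v h).trans ℓ.le_succ) fun h => (hTℓ v h).le
  rw [pinWeight, isIndepSet_union_iff_of_subset_levelSet hG hT, hfilter, inter_union_distrib_left,
    disjoint_iff_inter_eq_empty.1 hdisj, empty_union, inter_eq_right.2 hT, hsdiff]
  by_cases hblock : ∀ u ∈ T, ¬ ∃ v ∈ S, G.Adj v u
  · rw [if_pos ⟨⟨hS, hblock⟩, hlevel⟩, mul_assoc, prod_congr rfl fun u hu => if_neg (hblock u hu)]
  · rw [if_neg fun h => hblock h.1.2]
    push Not at hblock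
    obtain ⟨u, hu, hblocked⟩ := hblock
    rw [prod_eq_zero (f := fun u => if ∃ v ∈ S, G.Adj v u then (0 : ℝ) else p u) hu
      (if_pos hblocked), zero_mul, mul_zero]

lemma biUnion_children_eq_filter (hG : G.IsTree) (hSℓ : ∀ v ∈ S, G.dist r v ≤ ℓ) :
    (levelSet G r ℓ ∩ S).biUnion (children G r) =
      (levelSet G r (ℓ + 1)).filter fun u => ∃ v ∈ S, G.Adj v u := by
  ext u
  simp only [mem_biUnion, mem_inter, mem_levelSet, mem_children, mem_filter]
  constructor
  · rintro ⟨v, ⟨hv, hvS⟩, hvu, hu⟩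
    exact ⟨hu.trans (by rw [hv]), v, hvS, hvu⟩
  · rintro ⟨hu, v, hvS, hvu⟩
    have hv := hSℓ v hvS
    rcases hG.dist_eq_dist_add_one_of_adj r hvu with h | h
    · omega
    · exact ⟨v, ⟨by omega, hvS⟩, hvu, h⟩

lemma sum_pinWeight_succ_union (hG : G.IsTree) (hS : IsIndepSet G S)
    (hSℓ : ∀ v ∈ S, G.dist r v ≤ ℓ) :
    ∑ T ∈ (levelSet G r (ℓ + 1)).powerset,
        pinWeight G r lam (ℓ + 1) (levelSet G r (ℓ + 1)) p (S ∪ T) =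
      lam ^ S.card * ∏ v ∈ levelSet G r ℓ ∩ S, ∏ c ∈ children G r v, (1 - p c) := by
  rw [sum_congr rfl fun T hT => pinWeight_succ_union hG hS hSℓ (mem_powerset.1 hT), ← mul_sum,
    ← prod_add, ← prod_biUnion (pairwiseDisjoint_children hG _),
    biUnion_children_eq_filter hG hSℓ, prod_filter]
  congr 1
  refine prod_congr rfl fun u _ => ?_
  split_ifs <;> ring

lemma card_eq_card_filter_lt_add_card_levelSet_inter (hSℓ : ∀ v ∈ S, G.dist r v ≤ ℓ) :
    S.card = (S.filter fun v => G.dist r v < ℓ).card + (levelSet G r ℓ ∩ S).card := by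
  rw [← card_filter_add_card_filter_not (s := S) (fun v => G.dist r v < ℓ)]
  congr 2
  ext v
  simp only [mem_filter, mem_inter, mem_levelSet, not_lt]
  exact ⟨fun h => ⟨(hSℓ v h.1).antisymm h.2, h.1⟩, fun h => ⟨h.2, h.1.ge⟩⟩

lemma sum_pinWeight_union (hG : G.IsTree) (hlam : 0 ≤ lam) (hp : ∀ u, p u ∈ Set.Icc (0 : ℝ) 1)
    (hS : S ⊆ (levelSet G r (ℓ + 1))ᶜ) :
    ∑ T ∈ (levelSet G r (ℓ + 1)).powerset,
        pinWeight G r lam (ℓ + 1) (levelSet G r (ℓ + 1)) p (S ∪ T) =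
      (∏ v ∈ levelSet G r ℓ, (1 + ratioStep G r lam p v)) *
        pinWeight G r lam ℓ (levelSet G r ℓ) (marginalStep G r lam p) S := by
  by_cases hI : IsIndepSet G S ∧ ∀ v ∈ S, G.dist r v ≤ ℓ
  · rw [sum_pinWeight_succ_union hG hI.1 hI.2, pinWeight, if_pos hI,
      card_eq_card_filter_lt_add_card_levelSet_inter hI.2, pow_add, mul_assoc, mul_assoc,
      mul_left_comm (∏ v ∈ levelSet G r ℓ, (1 + ratioStep G r lam p v)),
      prod_one_add_ratioStep_mul hlam hp]
    simp only [ratioStep, prod_mul_distrib, prod_const]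
  · rw [pinWeight, if_neg hI, mul_zero]
    refine sum_eq_zero fun T hT => if_neg fun h => hI ⟨?_, fun v hv => ?_⟩
    · exact ((isIndepSet_union_iff_of_subset_levelSet hG (mem_powerset.1 hT)).1 h.1).1
    · have hle := h.2 v (mem_union_left T hv)
      have hne := mem_compl.1 (hS hv)
      rw [mem_levelSet] at hne
      omega

end PinWeight

section RootRatio

variable {G : SimpleGraph V} {r : V} {lam : ℝ} {p : V → ℝ} {ℓ : ℕ}

lemma sum_eq_sum_powerset_compl_sum_powerset {M : Type*} [AddCommMonoid M] (L : Finset V)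
    (F : Finset V → M) :
    ∑ S : Finset V, F S = ∑ S ∈ Lᶜ.powerset, ∑ T ∈ L.powerset, F (S ∪ T) := by
  rw [← sum_product']
  refine sum_bij' (fun S _ => (S \ L, S ∩ L)) (fun A _ => A.1 ∪ A.2) ?_ ?_ ?_ ?_ ?_
  · exact fun S _ => mem_product.2 ⟨mem_powerset.2 fun v hv => mem_compl.2 (mem_sdiff.1 hv).2,
      mem_powerset.2 inter_subset_right⟩
  · exact fun _ _ => mem_univ _
  · exact fun S _ => sdiff_union_inter S L
  · rintro ⟨A, B⟩ hAB
    simp only [mem_product, mem_powerset, subset_compl_iff_disjoint_right] at hAB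
    simp only [union_sdiff_distrib, hAB.1.sdiff_eq_left, sdiff_eq_empty_iff_subset.2 hAB.2,
      union_empty, union_inter_distrib_right, disjoint_iff_inter_eq_empty.1 hAB.1,
      inter_eq_left.2 hAB.2, empty_union]
  · exact fun S _ => by rw [sdiff_union_inter]

lemma sum_mul_pinWeight_succ (hG : G.IsTree) (hlam : 0 ≤ lam)
    (hp : ∀ u, p u ∈ Set.Icc (0 : ℝ) 1) {g : Finset V → ℝ}
    (hg : ∀ S, ∀ T ⊆ levelSet G r (ℓ + 1), g (S ∪ T) = g S) :
    ∑ S : Finset V, g S * pinWeight G r lam (ℓ + 1) (levelSet G r (ℓ + 1)) p S =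
      (∏ v ∈ levelSet G r ℓ, (1 + ratioStep G r lam p v)) *
        ∑ S : Finset V, g S *
          pinWeight G r lam ℓ (levelSet G r ℓ) (marginalStep G r lam p) S := by
  have hsupport : ∀ S ∉ (levelSet G r (ℓ + 1))ᶜ.powerset,
      pinWeight G r lam ℓ (levelSet G r ℓ) (marginalStep G r lam p) S = 0 := fun S hS =>
    if_neg fun h => hS <| mem_powerset.2 fun v hv => mem_compl.2 fun hvL => by
      have := h.2 v hv
      rw [mem_levelSet] at hvL
      omega
  rw [sum_eq_sum_powerset_compl_sum_powerset (levelSet G r (ℓ + 1)),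
    ← sum_subset (subset_univ (levelSet G r (ℓ + 1))ᶜ.powerset)
      fun S _ hS => by rw [hsupport S hS, mul_zero], mul_sum]
  refine sum_congr rfl fun S hS => ?_
  rw [sum_congr rfl fun T hT => by rw [hg S T (mem_powerset.1 hT)], ← mul_sum,
    sum_pinWeight_union hG hlam hp (mem_powerset.1 hS), mul_left_comm]

lemma ratio_pinWeight_succ (hG : G.IsTree) (hlam : 0 ≤ lam)
    (hp : ∀ u, p u ∈ Set.Icc (0 : ℝ) 1) :
    ratio (pinWeight G r lam (ℓ + 1) (levelSet G r (ℓ + 1)) p) r =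
      ratio (pinWeight G r lam ℓ (levelSet G r ℓ) (marginalStep G r lam p)) r := by
  have hC : ∏ v ∈ levelSet G r ℓ, (1 + ratioStep G r lam p v) ≠ 0 :=
    prod_ne_zero_iff.2 fun v _ => (one_add_ratioStep_pos hlam hp v).ne'
  have htotal := sum_mul_pinWeight_succ hG (r := r) (ℓ := ℓ) hlam hp (g := fun _ => 1)
    fun _ _ _ => rfl
  have hroot := sum_mul_pinWeight_succ hG (r := r) (ℓ := ℓ) hlam hp
    (g := fun S => if r ∈ S then 1 else 0) fun S T hT => by
      have hrT : r ∉ T := fun h => by simpa using mem_levelSet.1 (hT h)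
      simp only [mem_union, hrT, or_false]
  simp only [one_mul, ite_mul, zero_mul] at htotal hroot
  rw [ratio, ratio, prMem, prMem, htotal, hroot, mul_div_mul_left _ _ hC]

lemma levelSet_zero (hG : G.Connected) (r : V) : levelSet G r 0 = {r} := by
  ext v
  rw [mem_levelSet, hG.dist_eq_zero_iff, mem_singleton, eq_comm]

lemma pinWeight_zero (hG : G.Connected) (r : V) (lam : ℝ) (p : V → ℝ) (S : Finset V) :
    pinWeight G r lam 0 (levelSet G r 0) p S =
      if S = ∅ then 1 - p r else if S = {r} then p r else 0 := by
  rw [levelSet_zero hG]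
  have hsupport : (∀ v ∈ S, G.dist r v ≤ 0) ↔ S = ∅ ∨ S = {r} := by
    simp only [Nat.le_zero, hG.dist_eq_zero_iff, ← subset_singleton_iff, subset_iff,
      mem_singleton, eq_comm]
  simp only [pinWeight, hsupport]
  rcases eq_or_ne S ∅ with rfl | hempty
  · simp [IsIndepSet]
  rcases eq_or_ne S {r} with rfl | hsingleton
  · simp [IsIndepSet]
  · rw [if_neg fun h => h.2.elim hempty hsingleton, if_neg hempty, if_neg hsingleton]

lemma ratio_pinWeight_zero (hG : G.Connected) (r : V) (lam : ℝ) (p : V → ℝ) :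
    ratio (pinWeight G r lam 0 (levelSet G r 0) p) r = p r / (1 - p r) := by
  have htotal : ∑ S : Finset V, pinWeight G r lam 0 (levelSet G r 0) p S = 1 := by
    simp only [pinWeight_zero hG]
    rw [← sum_subset (subset_univ {∅, {r}}), sum_pair (singleton_ne_empty r).symm]
    · simp
    · intro S _ hS
      simp only [mem_insert, mem_singleton, not_or] at hS
      rw [if_neg hS.1, if_neg hS.2]
  have hroot : ∑ S : Finset V,
      (if r ∈ S then pinWeight G r lam 0 (levelSet G r 0) p S else 0) = p r := by
    simp only [pinWeight_zero hG]
    rw [sum_eq_single {r} _ (by simp)]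
    · simp
    · intro S _ hS
      rcases eq_or_ne S ∅ with rfl | hempty
      · simp
      · rw [if_neg hempty, if_neg hS, ite_self]
  rw [ratio, prMem, htotal, hroot, div_one]

lemma ratio_pinWeight_eq_iterate_div (hG : G.IsTree) (hlam : 0 ≤ lam)
    (hp : ∀ u, p u ∈ Set.Icc (0 : ℝ) 1) (n : ℕ) :
    ratio (pinWeight G r lam n (levelSet G r n) p) r =
      (marginalStep G r lam)^[n] p r / (1 - (marginalStep G r lam)^[n] p r) := by
  induction n generalizing p with
  | zero => exact ratio_pinWeight_zero hG.connected r lam p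
  | succ n ih =>
    rw [ratio_pinWeight_succ hG hlam hp, ih (marginalStep_mem_Icc hlam hp),
      Function.iterate_succ_apply]

lemma ratio_pinWeight_succ_eq_ratioStep (hG : G.IsTree) (hlam : 0 ≤ lam)
    (hp : ∀ u, p u ∈ Set.Icc (0 : ℝ) 1) (n : ℕ) :
    ratio (pinWeight G r lam (n + 1) (levelSet G r (n + 1)) p) r =
      ratioStep G r lam ((marginalStep G r lam)^[n] p) r := by
  rw [ratio_pinWeight_eq_iterate_div hG hlam hp, Function.iterate_succ_apply',
    marginalStep_div_one_sub hlam (iterate_marginalStep_mem_Icc hlam hp n)]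

end RootRatio

section Contraction

variable {G : SimpleGraph V} {r v : V} {lam δ q ε : ℝ} {p p' : V → ℝ} {d : ℕ}

lemma hyperbolicCoord_ratioStep_marginalStep (hlam : 0 ≤ lam)
    (hp : ∀ u, p u ∈ Set.Icc (0 : ℝ) 1) (v : V) :
    hyperbolicCoord (ratioStep G r lam (marginalStep G r lam p) v) =
      hyperbolicStep lam (children G r v) fun c => hyperbolicCoord (ratioStep G r lam p c) := by
  have hsqrt : √(ratioStep G r lam (marginalStep G r lam p) v) =
      √lam * ∏ c ∈ children G r v, (√(1 + ratioStep G r lam p c))⁻¹ := by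
    simp only [ratioStep.eq_def G r lam (marginalStep G r lam p), one_sub_marginalStep hlam hp]
    rw [Real.sqrt_mul hlam,
      Real.sqrt_prod _ fun c _ => inv_nonneg.2 (one_add_ratioStep_pos hlam hp c).le]
    simp only [Real.sqrt_inv]
  simp only [hyperbolicStep, cosh_hyperbolicCoord (ratioStep_mem_Icc hlam hp _).1]
  rw [hyperbolicCoord, hsqrt]

lemma ratioStep_marginalStep_mem_Icc (hlam : 0 ≤ lam) (hp : ∀ u, p u ∈ Set.Icc (0 : ℝ) 1)
    (hd : (children G r v).card ≤ d) :
    ratioStep G r lam (marginalStep G r lam p) v ∈ Set.Icc (lam / (1 + lam) ^ d) lam := by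
  refine ⟨?_, (ratioStep_mem_Icc hlam (marginalStep_mem_Icc hlam hp) v).2⟩
  have hprod : ((1 + lam) ^ d)⁻¹ ≤ ∏ c ∈ children G r v, (1 - marginalStep G r lam p c) := by
    calc ((1 + lam) ^ d)⁻¹ ≤ ((1 + lam) ^ (children G r v).card)⁻¹ := by gcongr; linarith
      _ = ∏ c ∈ children G r v, (1 + lam)⁻¹ := by rw [prod_const, inv_pow]
      _ ≤ _ := by
        refine prod_le_prod (fun c _ => by positivity) fun c _ => ?_
        rw [one_sub_marginalStep hlam hp]
        have := one_add_ratioStep_pos (G := G) (r := r) hlam hp c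
        gcongr
        exact (ratioStep_mem_Icc hlam hp c).2
  rw [div_eq_mul_inv]
  exact mul_le_mul_of_nonneg_left hprod hlam

lemma abs_hyperbolicCoord_ratioStep_marginalStep_sub_le (hlam : 0 ≤ lam)
    (hp : ∀ u, p u ∈ Set.Icc (0 : ℝ) 1) (hp' : ∀ u, p' u ∈ Set.Icc (0 : ℝ) 1) (hq : 0 ≤ q)
    (hdecay : ∀ x : ℝ, 0 ≤ x → symmetricDecay lam (children G r v).card x ≤ q ^ 2) (hε : 0 ≤ ε)
    (hchildren : ∀ c ∈ children G r v,
      |hyperbolicCoord (ratioStep G r lam p c) - hyperbolicCoord (ratioStep G r lam p' c)| ≤ ε) :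
    |hyperbolicCoord (ratioStep G r lam (marginalStep G r lam p) v) -
      hyperbolicCoord (ratioStep G r lam (marginalStep G r lam p') v)| ≤ q * ε := by
  rw [hyperbolicCoord_ratioStep_marginalStep hlam hp,
    hyperbolicCoord_ratioStep_marginalStep hlam hp']
  exact abs_hyperbolicStep_sub_le hlam hq hdecay hε hchildren

lemma sqrt_sub_sqrt_div_one_add_pow_nonneg (hlam : 0 ≤ lam) (d : ℕ) :
    0 ≤ √lam - √(lam / (1 + lam) ^ d) :=
  sub_nonneg.2 (Real.sqrt_le_sqrt (div_le_self hlam (one_le_pow₀ (by linarith))))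

lemma abs_hyperbolicCoord_iterate_sub_le (hd : d ≠ 0) (hlam : 0 < lam) (hδ0 : 0 ≤ δ)
    (hu : UpToUnique (d + 1) lam δ) (hG : G.IsTree)
    (hdeg : ∀ v : V, (G.neighborSet v).ncard ≤ d + 1)
    (hp : ∀ u, p u ∈ Set.Icc (0 : ℝ) 1) (hp' : ∀ u, p' u ∈ Set.Icc (0 : ℝ) 1) (n : ℕ)
    (hv : v ≠ r) :
    |hyperbolicCoord (ratioStep G r lam ((marginalStep G r lam)^[n + 1] p) v) -
      hyperbolicCoord (ratioStep G r lam ((marginalStep G r lam)^[n + 1] p') v)| ≤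
      √(1 - δ) ^ n * (√lam - √(lam / (1 + lam) ^ d)) := by
  have hD := sqrt_sub_sqrt_div_one_add_pow_nonneg hlam.le d
  induction n generalizing v with
  | zero =>
    have hcard := Nat.lt_succ_iff.1 (card_children_lt hG hdeg hv)
    rw [pow_zero, one_mul]
    exact abs_hyperbolicCoord_sub_le_of_mem_Icc (ratioStep_marginalStep_mem_Icc hlam.le hp hcard)
      (ratioStep_marginalStep_mem_Icc hlam.le hp' hcard)
  | succ n ih =>
    have hδ1 : 0 ≤ 1 - δ := sub_nonneg.2 (hu.lt_one (by omega) hlam).le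
    simp only [Function.iterate_succ_apply' _ (n + 1)]
    rw [pow_succ', mul_assoc]
    refine abs_hyperbolicCoord_ratioStep_marginalStep_sub_le hlam.le
      (iterate_marginalStep_mem_Icc hlam.le hp _) (iterate_marginalStep_mem_Icc hlam.le hp' _)
      (Real.sqrt_nonneg _) (fun x hx => ?_) (by positivity)
      fun c hc => ih (ne_root_of_mem_children hc)
    rw [Real.sq_sqrt hδ1]
    exact hu.symmetricDecay_le (by omega) hlam hδ0 (card_children_lt hG hdeg hv) hx

lemma UpToUnique.symmetricDecay_le_of_le_succ (hu : UpToUnique (d + 1) lam δ) (hd : d ≠ 0)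
    (hlam : 0 < lam) (hδ0 : 0 ≤ δ) {k : ℕ} (hk : k ≤ d + 1) {x : ℝ} (hx : 0 ≤ x) :
    symmetricDecay lam k x ≤ (((d : ℝ) + 1) / d) ^ 2 * (1 - δ) := by
  have hd0 : (0 : ℝ) < d := by exact_mod_cast Nat.pos_of_ne_zero hd
  have hδ1 : 0 ≤ 1 - δ := sub_nonneg.2 (hu.lt_one (by omega) hlam).le
  rcases hk.lt_or_eq with hk | rfl
  · refine (hu.symmetricDecay_le (by omega) hlam hδ0 hk hx).trans (le_mul_of_one_le_left hδ1 ?_)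
    exact one_le_pow₀ (by rw [one_le_div hd0]; linarith)
  · refine (symmetricDecay_succ_le hlam.le hd hx).trans ?_
    gcongr
    exact hu.symmetricDecay_le (by omega) hlam hδ0 d.lt_succ_self hx

lemma abs_hyperbolicCoord_root_sub_le (hd : d ≠ 0) (hlam : 0 < lam) (hδ0 : 0 ≤ δ)
    (hu : UpToUnique (d + 1) lam δ) (hG : G.IsTree)
    (hdeg : ∀ v : V, (G.neighborSet v).ncard ≤ d + 1)
    (hp : ∀ u, p u ∈ Set.Icc (0 : ℝ) 1) (hp' : ∀ u, p' u ∈ Set.Icc (0 : ℝ) 1) (n : ℕ) :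
    |hyperbolicCoord (ratioStep G r lam ((marginalStep G r lam)^[n + 2] p) r) -
      hyperbolicCoord (ratioStep G r lam ((marginalStep G r lam)^[n + 2] p') r)| ≤
      ((d : ℝ) + 1) / d * √(1 - δ) * (√(1 - δ) ^ n * (√lam - √(lam / (1 + lam) ^ d))) := by
  have hδ1 : 0 ≤ 1 - δ := sub_nonneg.2 (hu.lt_one (by omega) hlam).le
  have hD := sqrt_sub_sqrt_div_one_add_pow_nonneg hlam.le d
  simp only [Function.iterate_succ_apply' _ (n + 1)]
  refine abs_hyperbolicCoord_ratioStep_marginalStep_sub_le hlam.le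
    (iterate_marginalStep_mem_Icc hlam.le hp _) (iterate_marginalStep_mem_Icc hlam.le hp' _)
    (by positivity) (fun x hx => ?_) (by positivity) fun c hc =>
      abs_hyperbolicCoord_iterate_sub_le hd hlam hδ0 hu hG hdeg hp hp' n
        (ne_root_of_mem_children hc)
  rw [mul_pow, Real.sq_sqrt hδ1]
  exact hu.symmetricDecay_le_of_le_succ hd hlam hδ0 (card_children_le hdeg r r) hx

end Contraction

section InitialDiscrepancy

variable {lam y z : ℝ} {d : ℕ}

lemma succ_mul_pow_sub_one_le (hy : 1 ≤ y) (d : ℕ) :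
    ((d : ℝ) + 1) * (y ^ d - 1) ≤ d * (y ^ (d + 1) - 1) := by
  have hbernoulli : ∑ i ∈ range d, y ^ i ≤ d * y ^ d := by
    calc ∑ i ∈ range d, y ^ i ≤ ∑ _i ∈ range d, y ^ d :=
          sum_le_sum fun i hi => pow_le_pow_right₀ hy (mem_range.1 hi).le
      _ = d * y ^ d := by rw [sum_const, card_range, nsmul_eq_mul]
  have hgeom := geom_sum_mul y d
  have := mul_le_mul_of_nonneg_right hbernoulli (sub_nonneg.2 hy)
  rw [pow_succ]
  linarith

lemma two_mul_mul_one_sub_inv_pow_le (hz : 1 ≤ z) (hd : d ≠ 0) :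
    2 * (z * (1 - (z ^ d)⁻¹)) ≤ (z ^ d) ^ 2 - 1 := by
  have hzd : z ≤ z ^ d := le_self_pow₀ hz hd
  calc 2 * (z * (1 - (z ^ d)⁻¹)) = 2 * (z ^ d - 1) * (z / z ^ d) := by field_simp
    _ ≤ 2 * (z ^ d - 1) :=
      mul_le_of_le_one_right (by linarith) (div_le_one_of_le₀ hzd (by linarith))
    _ ≤ (z ^ d) ^ 2 - 1 := by linarith [sq_nonneg (z ^ d - 1)]

lemma initial_discrepancy_le (hlam : 0 ≤ lam) (hd : d ≠ 0) :
    2 * √lam * √(1 + lam) * (((d : ℝ) + 1) / d * (√lam - √(lam / (1 + lam) ^ d))) ≤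
      lam * ((1 + lam) ^ (d + 1) - 1) := by
  have hd0 : (0 : ℝ) < d := by exact_mod_cast Nat.pos_of_ne_zero hd
  set z := √(1 + lam)
  have hzsq : z ^ 2 = 1 + lam := Real.sq_sqrt (by linarith)
  have hsqrt : √(lam / (1 + lam) ^ d) = √lam / z ^ d := by
    rw [Real.sqrt_div hlam, ← hzsq, pow_right_comm, Real.sqrt_sq (by positivity)]
  calc 2 * √lam * z * (((d : ℝ) + 1) / d * (√lam - √(lam / (1 + lam) ^ d)))
      = √lam ^ 2 * (((d : ℝ) + 1) / d * (2 * (z * (1 - (z ^ d)⁻¹)))) := by rw [hsqrt]; ring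
    _ ≤ √lam ^ 2 * (((d : ℝ) + 1) / d * ((z ^ d) ^ 2 - 1)) := by
        gcongr
        exact two_mul_mul_one_sub_inv_pow_le (Real.one_le_sqrt.2 (by linarith)) hd
    _ = lam * ((((d : ℝ) + 1) * ((1 + lam) ^ d - 1)) / d) := by
        rw [Real.sq_sqrt hlam, pow_right_comm, hzsq, div_mul_eq_mul_div]
    _ ≤ lam * ((1 + lam) ^ (d + 1) - 1) := by
        gcongr
        rw [div_le_iff₀' hd0]
        exact succ_mul_pow_sub_one_le (by linarith) d

end InitialDiscrepancy

section Discrepancy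

variable {G : SimpleGraph V} {r : V} {lam δ C : ℝ} {p p' : V → ℝ} {d ℓ : ℕ}

lemma ratioStep_sub_ratioStep_le (hlam : 0 ≤ lam)
    (hdeg : ∀ v : V, (G.neighborSet v).ncard ≤ d)
    (hp : ∀ u, p u ∈ Set.Icc (0 : ℝ) 1) (hp' : ∀ u, p' u ∈ Set.Icc (0 : ℝ) 1) :
    ratioStep G r lam (marginalStep G r lam p) r - ratioStep G r lam (marginalStep G r lam p') r ≤
      lam * ((1 + lam) ^ d - 1) := by
  have hcard := card_children_le hdeg r r
  have hupper := (ratioStep_marginalStep_mem_Icc hlam hp hcard).2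
  have hlower := (ratioStep_marginalStep_mem_Icc hlam hp' hcard).1
  have hone : 1 ≤ (1 + lam) ^ d := one_le_pow₀ (by linarith)
  calc _ ≤ lam - lam / (1 + lam) ^ d := sub_le_sub hupper hlower
    _ = lam * ((1 + lam) ^ d - 1) / (1 + lam) ^ d := by field_simp
    _ ≤ lam * ((1 + lam) ^ d - 1) := div_le_self (mul_nonneg hlam (by linarith)) hone

lemma ratioStep_iterate_sub_le (hd : d ≠ 0) (hlam : 0 < lam) (hδ0 : 0 ≤ δ)
    (hu : UpToUnique (d + 1) lam δ) (hG : G.IsTree)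
    (hdeg : ∀ v : V, (G.neighborSet v).ncard ≤ d + 1)
    (hp : ∀ u, p u ∈ Set.Icc (0 : ℝ) 1) (hp' : ∀ u, p' u ∈ Set.Icc (0 : ℝ) 1) (n : ℕ) :
    ratioStep G r lam ((marginalStep G r lam)^[n + 2] p) r -
        ratioStep G r lam ((marginalStep G r lam)^[n + 2] p') r ≤
      √(1 - δ) ^ (n + 1) * (lam * ((1 + lam) ^ (d + 1) - 1)) := by
  have hmem : ∀ {q : V → ℝ}, (∀ u, q u ∈ Set.Icc (0 : ℝ) 1) →
      ratioStep G r lam ((marginalStep G r lam)^[n + 2] q) r ∈ Set.Icc 0 lam := fun hq =>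
    ratioStep_mem_Icc hlam.le (iterate_marginalStep_mem_Icc hlam.le hq _) r
  calc _ ≤ 2 * √lam * √(1 + lam) *
        |hyperbolicCoord (ratioStep G r lam ((marginalStep G r lam)^[n + 2] p) r) -
          hyperbolicCoord (ratioStep G r lam ((marginalStep G r lam)^[n + 2] p') r)| :=
        sub_le_mul_abs_hyperbolicCoord_sub (hmem hp) (hmem hp')
    _ ≤ 2 * √lam * √(1 + lam) *
        (((d : ℝ) + 1) / d * √(1 - δ) * (√(1 - δ) ^ n * (√lam - √(lam / (1 + lam) ^ d)))) := by
        gcongr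
        exact abs_hyperbolicCoord_root_sub_le hd hlam hδ0 hu hG hdeg hp hp' n
    _ = √(1 - δ) ^ (n + 1) * (2 * √lam * √(1 + lam) *
        (((d : ℝ) + 1) / d * (√lam - √(lam / (1 + lam) ^ d)))) := by ring
    _ ≤ √(1 - δ) ^ (n + 1) * (lam * ((1 + lam) ^ (d + 1) - 1)) := by
        exact mul_le_mul_of_nonneg_left (initial_discrepancy_le hlam.le hd) (by positivity)

lemma ratio_pinWeight_sub_le (hd : d ≠ 0) (hlam : 0 < lam) (hδ0 : 0 ≤ δ)
    (hu : UpToUnique (d + 1) lam δ) (hG : G.IsTree)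
    (hdeg : ∀ v : V, (G.neighborSet v).ncard ≤ d + 1)
    (hp : ∀ u, p u ∈ Set.Icc (0 : ℝ) 1) (hp' : ∀ u, p' u ∈ Set.Icc (0 : ℝ) 1) (n : ℕ) :
    ratio (pinWeight G r lam (n + 2) (levelSet G r (n + 2)) p) r -
        ratio (pinWeight G r lam (n + 2) (levelSet G r (n + 2)) p') r ≤
      √(1 - δ) ^ n * (lam * ((1 + lam) ^ (d + 1) - 1)) := by
  rw [ratio_pinWeight_succ_eq_ratioStep hG hlam.le hp,
    ratio_pinWeight_succ_eq_ratioStep hG hlam.le hp']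
  cases n with
  | zero =>
    rw [pow_zero, one_mul]
    exact ratioStep_sub_ratioStep_le hlam.le hdeg hp hp'
  | succ n => exact ratioStep_iterate_sub_le hd hlam hδ0 hu hG hdeg hp hp' n

lemma Rmax_sub_Rmin_le
    (hC : ∀ p p' : V → ℝ, (∀ u, p u ∈ Set.Icc (0 : ℝ) 1) → (∀ u, p' u ∈ Set.Icc (0 : ℝ) 1) →
      ratio (pinWeight G r lam ℓ (levelSet G r ℓ) p) r -
        ratio (pinWeight G r lam ℓ (levelSet G r ℓ) p') r ≤ C) :
    Rmax G r lam ℓ - Rmin G r lam ℓ ≤ C := by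
  have hne : {x : ℝ | ∃ p : V → ℝ, (∀ u, 0 ≤ p u ∧ p u ≤ 1) ∧
      x = ratio (pinWeight G r lam ℓ (levelSet G r ℓ) p) r}.Nonempty :=
    ⟨_, fun _ => 0, fun _ => ⟨le_rfl, zero_le_one⟩, rfl⟩
  rw [sub_le_iff_le_add, Rmax]
  refine csSup_le hne ?_
  rintro _ ⟨p, hp, rfl⟩
  rw [← sub_le_iff_le_add', Rmin]
  refine le_csInf hne ?_
  rintro _ ⟨p', hp', rfl⟩
  linarith [hC p p' hp hp']

end Discrepancy

lemma rpow_natCast_sub_two_div_two {a : ℝ} (ha : 0 ≤ a) (n : ℕ) :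
    a ^ ((((n + 2 : ℕ) : ℝ) - 2) / 2) = √a ^ n := by
  rw [Real.sqrt_eq_rpow, ← Real.rpow_mul_natCast ha]
  push_cast
  ring_nf

theorem statement16_general {Δ : ℕ} (hΔ : 2 ≤ Δ) {δ : ℝ} (hδ0 : 0 ≤ δ) {lam : ℝ} (hlam : 0 < lam)
    (hu : UpToUnique Δ lam δ) {V : Type*} [Fintype V] {G : SimpleGraph V} (hG : G.IsTree)
    (hdeg : ∀ v : V, (G.neighborSet v).ncard ≤ Δ) (r : V) {ℓ : ℕ} (hℓ : 2 ≤ ℓ) :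
    Rmax G r lam ℓ - Rmin G r lam ℓ
      ≤ (1 - δ) ^ (((ℓ : ℝ) - 2) / 2) * (lam * ((1 + lam) ^ Δ - 1)) := by
  obtain ⟨d, rfl⟩ : ∃ d, Δ = d + 1 := ⟨Δ - 1, by omega⟩
  obtain ⟨n, rfl⟩ : ∃ n, ℓ = n + 2 := ⟨ℓ - 2, by omega⟩
  rw [rpow_natCast_sub_two_div_two (sub_nonneg.2 (hu.lt_one hΔ hlam).le)]
  exact Rmax_sub_Rmin_le fun p p' hp hp' =>
    ratio_pinWeight_sub_le (by omega) hlam hδ0 hu hG hdeg hp hp' n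

/-- **strong spatial mixing on trees.** If `λ` is up-to-`Δ`
unique with gap `δ`, then for every tree of max degree at most `Δ` rooted at `r`
and every `ℓ ≥ 2`, `R_r^max(ℓ) - R_r^min(ℓ) ≤ (1-δ)^((ℓ-2)/2) · λ·((1+λ)^Δ - 1)`. -/
theorem statement16 (Δ : ℕ) (hΔ : 3 ≤ Δ) (δ : ℝ) (hδ0 : 0 < δ) (hδ1 : δ < 1)
    (lam : ℝ) (hlam : 0 < lam) (hu : UpToUnique Δ lam δ)
    (V : Type) [Fintype V] (G : SimpleGraph V) (hG : G.IsTree)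
    (hdeg : ∀ v : V, (G.neighborSet v).ncard ≤ Δ)
    (r : V) (ℓ : ℕ) (hℓ : 2 ≤ ℓ) :
    Rmax G r lam ℓ - Rmin G r lam ℓ
      ≤ (1 - δ) ^ (((ℓ : ℝ) - 2) / 2) * (lam * ((1 + lam) ^ Δ - 1)) :=
  statement16_general (by omega) hδ0.le hlam hu hG hdeg r hℓ

end PaperStmt
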